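/- arXiv:math/0602148 — 2 statements merged into one kernel-verified Lean document; each statement's English description precedes it below -/
import Mathlib

section
/- In Aut(F_n), for distinct indices i, j ∈ {1,…,n−1} the following identities hold: α_{ji}⁻¹ α_{in} α_{ji} = α_{ni} α_{jn}⁻¹ α_{ni}⁻¹ α_{in} α_{jn} and α_{ji} α_{in} α_{ji}⁻¹ = α_{jn} α_{in} α_{ni}⁻¹ α_{jn}⁻¹ α_{ni}. -/
open FreeGroup

/-- The free group on `n` generators. -/
abbrev FG (n : ℕ) : Type := FreeGroup (Fin n)

/-- The pure symmetric automorphism group `PΣ_n`: automorphisms sending each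
generator to a conjugate of itself. -/
def PSigmaAut (n : ℕ) : Subgroup (MulAut (FG n)) where
  carrier := {φ | ∀ i : Fin n, ∃ w : FG n, φ (of i) = w * of i * w⁻¹}
  one_mem' := fun i => ⟨1, by simp⟩
  mul_mem' := by
    rintro φ ψ hφ hψ i
    obtain ⟨w, hw⟩ := hψ i
    obtain ⟨v, hv⟩ := hφ i
    refine ⟨φ w * v, ?_⟩
    simp only [MulAut.mul_apply, hw, _root_.map_mul, _root_.map_inv, hv, mul_inv_rev, mul_assoc]
  inv_mem' := by
    intro φ hφ i
    obtain ⟨w, hw⟩ := hφ i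
    refine ⟨(φ⁻¹ w)⁻¹, ?_⟩
    refine φ.injective ?_
    simp only [MulAut.apply_inv_self, _root_.map_mul, _root_.map_inv, inv_inv, hw]
    group

/-- The projection `F_n → F_{n-1}` sending `x_n ↦ 1` and `x_i ↦ x_i` for `i < n-1`. -/
def projHom (n : ℕ) : FG n →* FG (n - 1) :=
  FreeGroup.lift fun i => if h : (i : ℕ) < n - 1 then of (⟨i, h⟩ : Fin (n - 1)) else 1

/-- The inclusion `F_{n-1} → F_n`. -/
def castHom (n : ℕ) : FG (n - 1) →* FG n :=
  FreeGroup.lift fun i => of (Fin.castLE (Nat.sub_le n 1) i)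

/-- The endomorphism of `F_{n-1}` induced by an automorphism of `F_n`. -/
def desc (n : ℕ) (φ : MulAut (FG n)) : FG (n - 1) →* FG (n - 1) :=
  (projHom n).comp ((φ : FG n ≃* FG n).toMonoidHom.comp (castHom n))

lemma desc_proj {n : ℕ} {φ : MulAut (FG n)} (hφ : φ ∈ PSigmaAut n) (x : FG n) :
    desc n φ (projHom n x) = projHom n (φ x) := by
  have : (desc n φ).comp (projHom n) = (projHom n).comp (φ : FG n ≃* FG n).toMonoidHom := by
    apply FreeGroup.ext_hom
    intro i
    by_cases h : (i : ℕ) < n - 1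
    · simp only [MonoidHom.comp_apply, projHom, FreeGroup.lift_apply_of, dif_pos h]
      simp only [desc, MonoidHom.comp_apply, castHom, FreeGroup.lift_apply_of]
      congr 2
    · obtain ⟨w, hw⟩ := hφ i
      simp only [MonoidHom.comp_apply, projHom, FreeGroup.lift_apply_of, dif_neg h,
        MulEquiv.coe_toMonoidHom, hw, _root_.map_mul, _root_.map_inv, _root_.map_one]
      simp
  exact DFunLike.congr_fun this x

lemma desc_mul {n : ℕ} {φ : MulAut (FG n)} (hφ : φ ∈ PSigmaAut n) (ψ : MulAut (FG n)) :
    desc n (φ * ψ) = (desc n φ).comp (desc n ψ) := by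
  apply FreeGroup.ext_hom
  intro i
  simp only [desc, MonoidHom.comp_apply, MulEquiv.coe_toMonoidHom, MulAut.mul_apply]
  exact (desc_proj hφ _).symm

lemma desc_one (n : ℕ) : desc n 1 = MonoidHom.id (FG (n - 1)) := by
  apply FreeGroup.ext_hom
  intro i
  simp only [desc, MonoidHom.comp_apply, MulEquiv.coe_toMonoidHom, MulAut.one_apply,
    castHom, FreeGroup.lift_apply_of, projHom, MonoidHom.id_apply]
  rw [dif_pos (show ((Fin.castLE (Nat.sub_le n 1) i : Fin n) : ℕ) < n - 1 from i.isLt)]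
  exact congrArg of (Fin.ext rfl)

/-- The automorphism of `F_{n-1}` induced by an element of `PΣ_n`. -/
def descAut (n : ℕ) (φ : PSigmaAut n) : MulAut (FG (n - 1)) :=
  MonoidHom.toMulEquiv (desc n ↑φ) (desc n ↑(φ⁻¹))
    (by
      rw [← desc_mul (φ⁻¹).2 ↑φ]
      norm_num [desc_one])
    (by
      rw [← desc_mul φ.2 ↑(φ⁻¹)]
      norm_num [desc_one])

lemma descAut_mem (n : ℕ) (φ : PSigmaAut n) : descAut n φ ∈ PSigmaAut (n - 1) := by
  intro i
  obtain ⟨w, hw⟩ := φ.2 (Fin.castLE (Nat.sub_le n 1) i)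
  refine ⟨projHom n w, ?_⟩
  have : descAut n φ (of i) = projHom n ((φ : MulAut (FG n)) (of (Fin.castLE (Nat.sub_le n 1) i))) := by
    simp only [descAut, MonoidHom.toMulEquiv, MulEquiv.coe_mk, Equiv.coe_fn_mk, desc,
      MonoidHom.comp_apply, MulEquiv.coe_toMonoidHom, castHom, FreeGroup.lift_apply_of]
  rw [this, hw]
  simp only [_root_.map_mul, _root_.map_inv, projHom, FreeGroup.lift_apply_of]
  rw [dif_pos (show ((Fin.castLE (Nat.sub_le n 1) i : Fin n) : ℕ) < n - 1 from i.isLt)]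
  congr 2

/-- The homomorphism `π_n : PΣ_n → PΣ_{n-1}` induced by killing the last generator. -/
def piHom (n : ℕ) : PSigmaAut n →* PSigmaAut (n - 1) :=
  MonoidHom.mk' (fun φ => ⟨descAut n φ, descAut_mem n φ⟩)
    (by
      intro φ ψ
      refine Subtype.ext (MulEquiv.ext fun x => ?_)
      show desc n ↑(φ * ψ) x = (descAut n φ * descAut n ψ) x
      rw [MulAut.mul_apply]
      show _ = desc n ↑φ (desc n ↑ψ x)
      rw [Subgroup.coe_mul, desc_mul φ.2]
      rfl)

/-- The kernel `K_n` of `π_n : PΣ_n → PΣ_{n-1}`. -/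
def Kn (n : ℕ) : Subgroup (PSigmaAut n) := (piHom n).ker

/-- The monoid hom underlying `α_{ij}`: sends `x_i ↦ x_j x_i x_j⁻¹` and fixes the
other generators. -/
def alphaHom (n : ℕ) (i j : Fin n) : FG n →* FG n :=
  FreeGroup.lift fun r => if r = i then of j * of i * (of j)⁻¹ else of r

/-- The inverse of `alphaHom`. -/
def alphaInvHom (n : ℕ) (i j : Fin n) : FG n →* FG n :=
  FreeGroup.lift fun r => if r = i then (of j)⁻¹ * of i * of j else of r

/-- The McCool generator `α_{ij} ∈ Aut(F_n)`, sending `x_i ↦ x_j x_i x_j⁻¹` and fixing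
the other generators (defined to be the identity if `i = j`). -/
def alphaAut (n : ℕ) (i j : Fin n) : MulAut (FG n) :=
  if h : i = j then 1 else
    MonoidHom.toMulEquiv (alphaHom n i j) (alphaInvHom n i j)
      (by
        apply FreeGroup.ext_hom
        intro r
        by_cases hr : r = i
        · subst hr
          simp [alphaHom, alphaInvHom, Ne.symm h, mul_assoc]
        · simp [alphaHom, alphaInvHom, hr])
      (by
        apply FreeGroup.ext_hom
        intro r
        by_cases hr : r = i
        · subst hr
          simp [alphaHom, alphaInvHom, Ne.symm h, mul_assoc]
        · simp [alphaHom, alphaInvHom, hr])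

lemma alphaAut_apply_of (n : ℕ) {i j : Fin n} (hij : i ≠ j) (r : Fin n) :
    alphaAut n i j (of r) = if r = i then of j * of i * (of j)⁻¹ else of r := by
  simp only [alphaAut, dif_neg hij]
  show alphaHom n i j (of r) = _
  simp [alphaHom]

lemma alphaAut_mem (n : ℕ) (i j : Fin n) : alphaAut n i j ∈ PSigmaAut n := by
  by_cases h : i = j
  · simp only [alphaAut, dif_pos h]
    exact (PSigmaAut n).one_mem
  · intro r
    rw [alphaAut_apply_of n h r]
    by_cases hr : r = i
    · subst hr
      exact ⟨of j, by simp⟩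
    · exact ⟨1, by simp [hr]⟩

/-- `α_{ij}` as an element of `PΣ_n`. -/
def alphaP (n : ℕ) (i j : Fin n) : PSigmaAut n := ⟨alphaAut n i j, alphaAut_mem n i j⟩

/-!
The identities are formal consequences of McCool's relations
`[α_{ik}, α_{jk}] = 1` and `[α_{ik} α_{jk}, α_{ij}] = 1`. Put `a = α_{ji}`, `b = α_{in}`,
`c = α_{ni}`, `d = α_{jn}`. Then `ac` and `ca` commute with `d`, so conjugating `d` by `c` can be
replaced by conjugating it by `a` in the opposite direction; since `a` also commutes with `bd`, and
`b` with `d`, what remains is a conjugate of `b` by `a`.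
-/

section CommutationIdentities

variable {G : Type*} [Group G] {a b c d : G}

lemma inv_mul_mul_eq_mul_mul_inv_of_commute (h : Commute (a * c) d) :
    a⁻¹ * d * a = c * d * c⁻¹ := by
  rw [eq_mul_inv_iff_mul_eq, mul_assoc, mul_assoc, inv_mul_eq_iff_eq_mul, ← mul_assoc a c d]
  exact h.eq.symm

lemma inv_mul_mul_eq_of_commute (hbd : Commute b d) (ha : Commute a (b * d))
    (hac : Commute (a * c) d) :
    a⁻¹ * b * a = c * d⁻¹ * c⁻¹ * b * d := by
  symm
  calc c * d⁻¹ * c⁻¹ * b * d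
      = (c * d⁻¹ * c⁻¹) * (b * d) := mul_assoc _ _ _
    _ = (a⁻¹ * d⁻¹ * a) * (b * d) := by
        rw [inv_mul_mul_eq_mul_mul_inv_of_commute hac.inv_right]
    _ = a⁻¹ * (d⁻¹ * (b * d)) * a := by simp only [mul_assoc, ha.eq]
    _ = a⁻¹ * b * a := by rw [hbd.eq, inv_mul_cancel_left]

lemma mul_mul_inv_eq_of_commute (hbd : Commute b d) (ha : Commute a (b * d))
    (hca : Commute (c * a) d) :
    a * b * a⁻¹ = d * b * c⁻¹ * d⁻¹ * c := by
  symm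
  calc d * b * c⁻¹ * d⁻¹ * c
      = (b * d) * (c⁻¹ * d⁻¹ * c) := by simp only [hbd.eq, mul_assoc]
    _ = (b * d) * (a * d⁻¹ * a⁻¹) := by
        rw [inv_mul_mul_eq_mul_mul_inv_of_commute hca.inv_right]
    _ = a * (b * d) * d⁻¹ * a⁻¹ := by simp only [ha.eq, mul_assoc]
    _ = a * b * a⁻¹ := by rw [← mul_assoc a b d, mul_inv_cancel_right]

end CommutationIdentities

lemma mulAut_freeGroup_ext {ι : Type*} {φ ψ : MulAut (FreeGroup ι)}
    (h : ∀ r, φ (of r) = ψ (of r)) : φ = ψ :=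
  MulEquiv.toMonoidHom_injective (FreeGroup.ext_hom _ _ h)

section McCoolRelations

variable {n : ℕ}

lemma alphaAut_self (i : Fin n) : alphaAut n i i = 1 :=
  dif_pos rfl

lemma alphaAut_apply_of_left (i j : Fin n) :
    alphaAut n i j (of i) = of j * of i * (of j)⁻¹ := by
  obtain rfl | hij := eq_or_ne i j
  · rw [alphaAut_self, MulAut.one_apply, mul_inv_cancel_right]
  · rw [alphaAut_apply_of n hij, if_pos rfl]

lemma alphaAut_apply_of_of_ne {i r : Fin n} (j : Fin n) (hr : r ≠ i) :
    alphaAut n i j (of r) = of r := by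
  obtain rfl | hij := eq_or_ne i j
  · rw [alphaAut_self, MulAut.one_apply]
  · rw [alphaAut_apply_of n hij, if_neg hr]

lemma alphaAut_apply_of_right (i j : Fin n) : alphaAut n i j (of j) = of j := by
  obtain rfl | hij := eq_or_ne i j
  · rw [alphaAut_self, MulAut.one_apply]
  · exact alphaAut_apply_of_of_ne j hij.symm

lemma commute_alphaAut_of_apply_eq_conj {i j : Fin n} {φ : MulAut (FG n)} {w : FG n}
    (hi : φ (of i) = w * of i * w⁻¹) (hj : φ (of j) = w * of j * w⁻¹)
    (hw : alphaAut n i j w = w)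
    (hφ : ∀ r, r ≠ i → r ≠ j → alphaAut n i j (φ (of r)) = φ (of r)) :
    Commute φ (alphaAut n i j) := by
  refine mulAut_freeGroup_ext fun r => ?_
  rw [MulAut.mul_apply, MulAut.mul_apply]
  by_cases hri : r = i
  · subst hri
    simp only [alphaAut_apply_of_left, hi, hj, hw, _root_.map_mul, _root_.map_inv]
    group
  by_cases hrj : r = j
  · subst hrj
    simp only [alphaAut_apply_of_right, hj, hw, _root_.map_mul, _root_.map_inv]
  · rw [alphaAut_apply_of_of_ne j hri, hφ r hri hrj]

lemma commute_alphaAut_alphaAut (i j k : Fin n) :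
    Commute (alphaAut n i k) (alphaAut n j k) := by
  obtain rfl | hij := eq_or_ne i j
  · exact Commute.refl _
  have fixes_of_j : alphaAut n i k (of j) = of j := alphaAut_apply_of_of_ne k hij.symm
  have fixes_of_k : alphaAut n i k (of k) = of k := alphaAut_apply_of_right i k
  refine commute_alphaAut_of_apply_eq_conj (w := 1) (by simpa using fixes_of_j)
    (by simpa using fixes_of_k) (_root_.map_one _) fun r hrj _ => ?_
  obtain rfl | hri := eq_or_ne r i
  · simp only [alphaAut_apply_of_left, alphaAut_apply_of_right, alphaAut_apply_of_of_ne k hrj,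
      _root_.map_mul, _root_.map_inv]
  · rw [alphaAut_apply_of_of_ne k hri, alphaAut_apply_of_of_ne k hrj]

lemma commute_alphaAut_mul_alphaAut {i k : Fin n} (j : Fin n) (hik : i ≠ k) :
    Commute (alphaAut n i k * alphaAut n j k) (alphaAut n i j) := by
  obtain rfl | hij := eq_or_ne i j
  · rw [alphaAut_self]
    exact Commute.one_right _
  have conj_of_i : (alphaAut n i k * alphaAut n j k) (of i) = of k * of i * (of k)⁻¹ := by
    rw [MulAut.mul_apply, alphaAut_apply_of_of_ne k hij, alphaAut_apply_of_left]
  have conj_of_j : (alphaAut n i k * alphaAut n j k) (of j) = of k * of j * (of k)⁻¹ := by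
    simp only [MulAut.mul_apply, alphaAut_apply_of_left, alphaAut_apply_of_right,
      alphaAut_apply_of_of_ne k hij.symm, _root_.map_mul, _root_.map_inv]
  refine commute_alphaAut_of_apply_eq_conj conj_of_i conj_of_j
    (alphaAut_apply_of_of_ne j hik.symm) fun r hri hrj => ?_
  rw [MulAut.mul_apply, alphaAut_apply_of_of_ne k hrj, alphaAut_apply_of_of_ne k hri,
    alphaAut_apply_of_of_ne j hri]

end McCoolRelations

theorem statement16_general {n : ℕ} {i j k : Fin n} (hij : i ≠ j) (hjk : j ≠ k) :
    (alphaAut n j i)⁻¹ * alphaAut n i k * alphaAut n j i =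
        alphaAut n k i * (alphaAut n j k)⁻¹ * (alphaAut n k i)⁻¹ *
          alphaAut n i k * alphaAut n j k ∧
    alphaAut n j i * alphaAut n i k * (alphaAut n j i)⁻¹ =
        alphaAut n j k * alphaAut n i k * (alphaAut n k i)⁻¹ *
          (alphaAut n j k)⁻¹ * alphaAut n k i := by
  have hbd : Commute (alphaAut n i k) (alphaAut n j k) := commute_alphaAut_alphaAut i j k
  have ha : Commute (alphaAut n j i) (alphaAut n i k * alphaAut n j k) := by
    rw [hbd.eq]
    exact (commute_alphaAut_mul_alphaAut i hjk).symm
  have hac : Commute (alphaAut n j i * alphaAut n k i) (alphaAut n j k) :=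
    commute_alphaAut_mul_alphaAut k hij.symm
  have hca : Commute (alphaAut n k i * alphaAut n j i) (alphaAut n j k) := by
    rwa [(commute_alphaAut_alphaAut k j i).eq]
  exact ⟨inv_mul_mul_eq_of_commute hbd ha hac, mul_mul_inv_eq_of_commute hbd ha hca⟩

/-- STATEMENT 16: In `Aut(F_n)`, for distinct `i, j ∈ {1,…,n-1}`:
`α_{ji}⁻¹ α_{in} α_{ji} = α_{ni} α_{jn}⁻¹ α_{ni}⁻¹ α_{in} α_{jn}` and
`α_{ji} α_{in} α_{ji}⁻¹ = α_{jn} α_{in} α_{ni}⁻¹ α_{jn}⁻¹ α_{ni}`. -/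
theorem statement16 (n : ℕ) (hn : 2 ≤ n) (i j : Fin (n - 1)) (hij : i ≠ j) :
    let I : Fin n := Fin.castLE (Nat.sub_le n 1) i
    let J : Fin n := Fin.castLE (Nat.sub_le n 1) j
    let N : Fin n := ⟨n - 1, by omega⟩
    (alphaAut n J I)⁻¹ * alphaAut n I N * alphaAut n J I =
        alphaAut n N I * (alphaAut n J N)⁻¹ * (alphaAut n N I)⁻¹ *
          alphaAut n I N * alphaAut n J N ∧
    alphaAut n J I * alphaAut n I N * (alphaAut n J I)⁻¹ =
        alphaAut n J N * alphaAut n I N * (alphaAut n N I)⁻¹ *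
          (alphaAut n J N)⁻¹ * alphaAut n N I := by
  exact statement16_general ((Fin.castLE_injective _).ne hij) (Fin.ne_of_lt j.isLt)
end

section
/- For every n ≥ 2 and every 1 ≤ i ≤ n−1, the automorphisms α_{in} and α_{ni} lie in the kernel K_n of π_n : PΣ_n → PΣ_{n−1}, and moreover K_n is normally generated in PΣ_n by the set { α_{in}, α_{ni} : 1 ≤ i ≤ n−1 } (i.e. K_n is the normal closure in PΣ_n of this set). -/
/-!
Generation of `PΣ_n` by the `α_{ij}` (Humphries, McCool). Write `φ x_i = w_i x_i w_i⁻¹`. If the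
word `w_i x_i^{±1}` is not reduced, the last letter of `w_i` can be dropped; if `w_i` starts with
`w_j x_j^{±1}`, then composing `φ` with `α_{ij}^{∓1}` cancels that letter. Both moves decrease
`∑ |w_i|`. When neither applies, the sets of reduced words starting with `w_i x_i^{±1}` are pairwise
disjoint and a ping-pong argument shows that `φ` sends every reduced word starting with `x_i^{±1}`
into the corresponding set; surjectivity of `φ` then forces every `w_i` to be trivial.

Kernel of `π_n`. The automorphisms which fix `x_n` and preserve `F_{n-1}` meet `K_n` trivially,
and contain all `α_{ij}` with `i, j < n`. Hence, together with the normal closure of the remaining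
generators, they span `PΣ_n`, and `K_n` cannot be larger than that normal closure.
-/

open FreeGroup

section ConjugatingEndomorphisms

variable {α : Type*}

/-- `w` is a family of conjugators for the endomorphism `φ` of a free group: `φ` sends each
generator `x_i` to `w_i x_i w_i⁻¹`. -/
def IsConjugatorFamily (φ : FreeGroup α →* FreeGroup α) (w : α → FreeGroup α) : Prop :=
  ∀ i, φ (of i) = w i * of i * (w i)⁻¹

namespace IsConjugatorFamily

variable {φ ψ : FreeGroup α →* FreeGroup α} {w v : α → FreeGroup α}

lemma map_mk_singleton (hw : IsConjugatorFamily φ w) (a : α × Bool) :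
    φ (mk [a]) = w a.1 * mk [a] * (w a.1)⁻¹ := by
  obtain ⟨i, _ | _⟩ := a
  · change φ (of i)⁻¹ = w i * (of i)⁻¹ * (w i)⁻¹
    rw [_root_.map_inv, hw i]
    group
  · exact hw i

lemma comp (hw : IsConjugatorFamily φ w) (hv : IsConjugatorFamily ψ v) :
    IsConjugatorFamily (φ.comp ψ) fun i => φ (v i) * w i := by
  intro i
  rw [MonoidHom.comp_apply, hv i, _root_.map_mul, _root_.map_mul, _root_.map_inv, hw i]
  group

variable [DecidableEq α]

lemma update {i : α} {u : FreeGroup α} (hw : IsConjugatorFamily φ w)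
    (hu : φ (of i) = u * of i * u⁻¹) : IsConjugatorFamily φ (Function.update w i u) := by
  intro k
  by_cases hk : k = i
  · subst hk
    simpa using hu
  · simpa [hk] using hw k

lemma comp_mulSingle {i : α} {c : FreeGroup α} (hw : IsConjugatorFamily φ w)
    (hψ : IsConjugatorFamily ψ (Pi.mulSingle i c)) :
    IsConjugatorFamily (φ.comp ψ) (Function.update w i (φ c * w i)) := by
  convert hw.comp hψ using 1
  ext1 k
  by_cases hk : k = i
  · subst hk
    simp
  · simp [hk]

end IsConjugatorFamily

variable [DecidableEq α]

lemma isPrefix_toWord_mul_iff_mem_startsWith {u v : FreeGroup α} {a : α × Bool}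
    (hu : IsReduced (u.toWord ++ [a])) :
    u.toWord ++ [a] <+: (u * v).toWord ↔ v ∈ startsWith a := by
  constructor
  · rintro ⟨t, ht⟩
    have hat : IsReduced (a :: t) :=
      (isReduced_toWord (x := u * v)).infix ⟨u.toWord, [], by simp [← ht]⟩
    have hv : v = mk (a :: t) := by
      rw [← mul_right_inj u, ← mk_toWord (x := u * v), ← ht, List.append_assoc, ← mul_mk,
        mk_toWord, List.singleton_append]
    simp [startsWith, hv, hat.reduce_eq]
  · intro hv
    obtain ⟨t, ht⟩ : ∃ t, v.toWord = a :: t := by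
      cases hvw : v.toWord <;> simp_all [startsWith]
    refine ⟨t, ?_⟩
    have hat : IsReduced ([a] ++ t) := by
      simpa [ht] using isReduced_toWord (x := v)
    rw [toWord_mul, ht, ← (hu.append_overlap hat (by simp)).reduce_eq]
    simp

lemma isPrefix_toWord_conj_mul {u g : FreeGroup α} {a : α × Bool}
    (hu : ∀ b, IsReduced (u.toWord ++ [(a.1, b)]))
    (hg : ¬ u.toWord ++ [(a.1, !a.2)] <+: g.toWord) :
    u.toWord ++ [a] <+: (u * mk [a] * u⁻¹ * g).toWord := by
  have hg' : u⁻¹ * g ∉ startsWith (a.1, !a.2) := by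
    rwa [← isPrefix_toWord_mul_iff_mem_startsWith (hu _), mul_inv_cancel_left]
  rw [mul_assoc, mul_assoc, isPrefix_toWord_mul_iff_mem_startsWith (hu a.2)]
  exact startsWith_mk_mul _ hg'

/-- The word `w_i x_i^{±1}`, for the letter `a = x_i^{±1}`. The elements of the free group whose
reduced word starts with it form a petal of the ping-pong argument. -/
def petalWord (w : α → FreeGroup α) (a : α × Bool) : List (α × Bool) :=
  (w a.1).toWord ++ [a]

/-- A family of conjugators is reduced if its petal words are reduced and none of them is a prefix
of a conjugator. -/
structure IsReducedFamily (w : α → FreeGroup α) : Prop where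
  isReduced_petalWord : ∀ a, IsReduced (petalWord w a)
  not_petalWord_isPrefix : ∀ a i, ¬ petalWord w a <+: (w i).toWord

namespace IsReducedFamily

variable {w : α → FreeGroup α}

lemma eq_of_petalWord_isPrefix_petalWord (hw : IsReducedFamily w) {a b : α × Bool}
    (h : petalWord w a <+: petalWord w b) : a = b := by
  rcases List.prefix_concat_iff.1 h with h | h
  · simpa using (List.append_inj' h rfl).2
  · exact absurd h (hw.not_petalWord_isPrefix _ _)

lemma eq_of_petalWord_isPrefix (hw : IsReducedFamily w) {a b : α × Bool} {L : List (α × Bool)}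
    (ha : petalWord w a <+: L) (hb : petalWord w b <+: L) : a = b :=
  (List.prefix_or_prefix_of_prefix ha hb).elim hw.eq_of_petalWord_isPrefix_petalWord
    fun h => (hw.eq_of_petalWord_isPrefix_petalWord h).symm

variable {φ : FreeGroup α →* FreeGroup α}

lemma petalWord_isPrefix_toWord_map (hw : IsReducedFamily w) (hφ : IsConjugatorFamily φ w)
    {a : α × Bool} {L : List (α × Bool)} (hL : IsReduced (a :: L)) :
    petalWord w a <+: (φ (FreeGroup.mk (a :: L))).toWord := by
  induction L generalizing a with
  | nil =>
    have h := isPrefix_toWord_conj_mul (u := w a.1) (g := 1)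
      (fun b => hw.isReduced_petalWord (a.1, b)) (by simp)
    rwa [mul_one, ← hφ.map_mk_singleton] at h
  | cons b L ih =>
    rw [isReduced_cons_cons] at hL
    have not_inverse_petal : ¬ petalWord w (a.1, !a.2) <+: (φ (FreeGroup.mk (b :: L))).toWord := by
      intro h
      have hab : b = (a.1, !a.2) := hw.eq_of_petalWord_isPrefix (ih hL.2) h
      simp [hab] at hL
    have h := isPrefix_toWord_conj_mul (u := w a.1)
      (fun b => hw.isReduced_petalWord (a.1, b)) not_inverse_petal
    rwa [← hφ.map_mk_singleton, ← _root_.map_mul, mul_mk] at h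

lemma eq_one_of_surjective (hw : IsReducedFamily w) (hφ : IsConjugatorFamily φ w)
    (hsurj : Function.Surjective φ) (i : α) : w i = 1 := by
  obtain ⟨g, hg⟩ := hsurj (of i)
  rcases hgw : g.toWord with _ | ⟨a, L⟩
  · rw [toWord_eq_nil_iff.1 hgw, _root_.map_one] at hg
    exact absurd hg (one_ne_of i)
  · have hpetal : petalWord w a <+: [(i, true)] := by
      have h := hw.petalWord_isPrefix_toWord_map hφ (hgw ▸ isReduced_toWord (x := g))
      rwa [← hgw, mk_toWord, hg, toWord_of] at h
    have hnil : (w a.1).toWord = [] := by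
      simpa [petalWord] using hpetal.length_le
    have ha : a = (i, true) := by
      simpa [petalWord, hnil] using hpetal
    simpa [ha] using hnil

lemma eq_id_of_surjective (hw : IsReducedFamily w) (hφ : IsConjugatorFamily φ w)
    (hsurj : Function.Surjective φ) : φ = MonoidHom.id _ := by
  ext1 i
  simp [hφ i, hw.eq_one_of_surjective hφ hsurj i]

end IsReducedFamily

lemma exists_norm_lt_and_conj_eq_of_not_isReduced {u : FreeGroup α} {a : α × Bool}
    (h : ¬ IsReduced (u.toWord ++ [a])) :
    ∃ v : FreeGroup α, v.norm < u.norm ∧ u * of a.1 * u⁻¹ = v * of a.1 * v⁻¹ := by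
  obtain ⟨l, c, hl, hc⟩ : ∃ l c, u.toWord = l ++ [c] ∧ c.1 = a.1 := by
    rcases u.toWord.eq_nil_or_concat' with hnil | ⟨l, c, hl⟩
    · simp [hnil] at h
    · refine ⟨l, c, hl, by_contra fun hc => h ?_⟩
      have hca : FreeGroup.IsReduced ([c] ++ [a]) := by simp [hc]
      rw [hl]
      exact FreeGroup.IsReduced.append_overlap (hl ▸ isReduced_toWord) hca (by simp)
  have hu : u = mk l * mk [c] := by rw [mul_mk, ← hl, mk_toWord]
  have hcomm : mk [c] * of a.1 * (mk [c])⁻¹ = of a.1 := by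
    obtain ⟨j, _ | _⟩ := c
    · obtain rfl : j = a.1 := hc
      change (of _)⁻¹ * of _ * ((of _)⁻¹)⁻¹ = of _
      group
    · obtain rfl : j = a.1 := hc
      exact mul_inv_cancel_right _ _
  refine ⟨mk l, norm_mk_le.trans_lt (by simp [FreeGroup.norm, hl]), ?_⟩
  conv_rhs => rw [← hcomm]
  rw [hu]
  group

lemma exists_eq_mul_and_norm_lt_of_isPrefix {u v : FreeGroup α} {a : α × Bool}
    (h : u.toWord ++ [a] <+: v.toWord) :
    ∃ t : FreeGroup α, v = u * mk [a] * t ∧ (u * t).norm < v.norm := by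
  obtain ⟨t, ht⟩ := h
  refine ⟨mk t, ?_, ?_⟩
  · rw [← mk_toWord (x := v), ← ht, ← mul_mk, ← mul_mk, mk_toWord]
  · have hv : v.norm = u.norm + 1 + t.length := by
      simp only [FreeGroup.norm, ← ht, List.length_append, List.length_singleton]
    have := norm_mul_le u (mk t)
    have := norm_mk_le (L₁ := t)
    omega

variable [Fintype α]

lemma sum_norm_update_lt {w : α → FreeGroup α} {i : α} {u : FreeGroup α}
    (hu : u.norm < (w i).norm) : ∑ k, (Function.update w i u k).norm < ∑ k, (w k).norm := by
  have h : Function.update (fun k => (w k).norm) i u.norm < fun k => (w k).norm :=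
    update_lt_self_iff.2 hu
  simpa only [Function.apply_update fun _ => FreeGroup.norm] using Fintype.sum_strictMono h

end ConjugatingEndomorphisms

section McCoolGenerators

variable {n : ℕ}

lemma isConjugatorFamily_alphaAut {i j : Fin n} (hij : i ≠ j) :
    IsConjugatorFamily (alphaAut n i j).toMonoidHom (Pi.mulSingle i (of j)) := by
  intro r
  change alphaAut n i j (of r) = _
  rw [alphaAut_apply_of n hij]
  by_cases hr : r = i
  · subst hr
    simp
  · simp [hr]

lemma isConjugatorFamily_alphaAut_inv {i j : Fin n} (hij : i ≠ j) :
    IsConjugatorFamily (alphaAut n i j)⁻¹.toMonoidHom (Pi.mulSingle i (of j)⁻¹) := by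
  intro r
  change (alphaAut n i j)⁻¹ (of r) = _
  apply (alphaAut n i j).injective
  rw [MulAut.apply_inv_self]
  by_cases hr : r = i
  · subst hr
    simp only [Pi.mulSingle_eq_same, _root_.map_mul, _root_.map_inv, alphaAut_apply_of n hij,
      if_neg hij.symm, if_true]
    group
  · simp [hr, alphaAut_apply_of n hij]

/-- The subgroup of `PΣ_n` generated by the automorphisms `α_{ij}`, `i ≠ j`. -/
def alphaSubgroup (n : ℕ) : Subgroup (PSigmaAut n) :=
  Subgroup.closure {g | ∃ i j : Fin n, i ≠ j ∧ g = alphaP n i j}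

lemma exists_mem_alphaSubgroup_isConjugatorFamily_mulSingle {i : Fin n} {a : Fin n × Bool}
    (hia : i ≠ a.1) :
    ∃ g ∈ alphaSubgroup n,
      IsConjugatorFamily (g : MulAut (FG n)).toMonoidHom (Pi.mulSingle i (mk [a])) := by
  have hmem : alphaP n i a.1 ∈ alphaSubgroup n := Subgroup.subset_closure ⟨i, a.1, hia, rfl⟩
  obtain ⟨j, _ | _⟩ := a
  · exact ⟨_, inv_mem hmem, isConjugatorFamily_alphaAut_inv hia⟩
  · exact ⟨_, hmem, isConjugatorFamily_alphaAut hia⟩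

lemma exists_mul_mem_alphaSubgroup_sum_norm_lt {φ : PSigmaAut n} {w : Fin n → FG n}
    (hφ : IsConjugatorFamily (φ : MulAut (FG n)).toMonoidHom w) (hw : ¬ IsReducedFamily w) :
    ∃ g ∈ alphaSubgroup n, ∃ v : Fin n → FG n,
      IsConjugatorFamily ((φ * g : PSigmaAut n) : MulAut (FG n)).toMonoidHom v ∧
        ∑ i, (v i).norm < ∑ i, (w i).norm := by
  by_cases hred : ∀ a, IsReduced (petalWord w a)
  · obtain ⟨a, i, hpre⟩ : ∃ a i, petalWord w a <+: (w i).toWord := by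
      by_contra! h
      exact hw ⟨hred, h⟩
    have hia : i ≠ a.1 := by
      rintro rfl
      simpa [petalWord] using hpre.length_le
    obtain ⟨t, hwi, hlt⟩ := exists_eq_mul_and_norm_lt_of_isPrefix hpre
    obtain ⟨g, hg, hgconj⟩ :=
      exists_mem_alphaSubgroup_isConjugatorFamily_mulSingle (a := (a.1, !a.2)) hia
    have hcancel : (φ : MulAut (FG n)).toMonoidHom (mk [(a.1, !a.2)]) * w i = w a.1 * t := by
      have hinv : (mk [(a.1, !a.2)] : FG n) = (mk [a])⁻¹ := rfl
      rw [hφ.map_mk_singleton, hinv, hwi]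
      group
    exact ⟨g, hg, _, hφ.comp_mulSingle hgconj, sum_norm_update_lt (hcancel ▸ hlt)⟩
  · push Not at hred
    obtain ⟨a, ha⟩ := hred
    obtain ⟨u, hlt, hu⟩ := exists_norm_lt_and_conj_eq_of_not_isReduced ha
    refine ⟨1, one_mem _, _, ?_, sum_norm_update_lt hlt⟩
    rw [mul_one]
    exact hφ.update ((hφ a.1).trans hu)

theorem alphaSubgroup_eq_top (n : ℕ) : alphaSubgroup n = ⊤ := by
  suffices h : ∀ (N : ℕ) (φ : PSigmaAut n) (w : Fin n → FG n),
      IsConjugatorFamily (φ : MulAut (FG n)).toMonoidHom w → ∑ i, (w i).norm = N →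
        φ ∈ alphaSubgroup n by
    refine (Subgroup.eq_top_iff' _).2 fun φ => ?_
    choose w hw using φ.2
    exact h _ φ w hw rfl
  intro N
  induction N using Nat.strong_induction_on with
  | _ N ih =>
    rintro φ w hφ rfl
    by_cases hw : IsReducedFamily w
    · have hid : φ = 1 := Subtype.ext <| MulEquiv.toMonoidHom_injective <|
        hw.eq_id_of_surjective hφ (φ : MulAut (FG n)).surjective
      exact hid ▸ one_mem _
    · obtain ⟨g, hg, v, hv, hlt⟩ := exists_mul_mem_alphaSubgroup_sum_norm_lt hφ hw
      exact (Subgroup.mul_mem_cancel_right _ hg).1 (ih _ hlt _ v hv rfl)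

end McCoolGenerators

section Kernel

lemma eq_of_disjoint_of_sup_eq_top {G : Type*} [Group G] {S N K : Subgroup G} [N.Normal]
    (hNK : N ≤ K) (hdisj : Disjoint S K) (hsup : S ⊔ N = ⊤) : K = N := by
  refine le_antisymm (fun g hg => ?_) hNK
  obtain ⟨s, hs, z, hz, rfl⟩ := Subgroup.mem_sup_of_normal_right.1 (hsup ▸ Subgroup.mem_top g)
  have hsK : s ∈ K := (Subgroup.mul_mem_cancel_right _ (hNK hz)).1 hg
  rwa [Subgroup.disjoint_def.1 hdisj hs hsK, one_mul]

variable {n : ℕ}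

/-- The index `i ≤ n - 1`, viewed as the index of a generator of `F_n`. -/
abbrev initIndex (i : Fin (n - 1)) : Fin n := Fin.castLE (Nat.sub_le n 1) i

/-- The index of the generator `x_n` of `F_n`; since `Fin n` counts from zero, it is `n - 1`. -/
abbrev lastIndex (hn : n - 1 < n) : Fin n := ⟨n - 1, hn⟩

lemma initIndex_ne_lastIndex (hn : n - 1 < n) (i : Fin (n - 1)) : initIndex i ≠ lastIndex hn :=
  fun h => i.2.ne (Fin.val_eq_of_eq h)

lemma eq_lastIndex_or_eq_initIndex (hn : n - 1 < n) (r : Fin n) :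
    r = lastIndex hn ∨ ∃ i, r = initIndex i := by
  by_cases hr : (r : ℕ) < n - 1
  · exact Or.inr ⟨⟨r, hr⟩, rfl⟩
  · exact Or.inl (Fin.ext (by dsimp only; omega))

lemma castHom_of (i : Fin (n - 1)) : castHom n (of i) = of (initIndex i) :=
  FreeGroup.lift_apply_of

lemma projHom_castHom (x : FG (n - 1)) : projHom n (castHom n x) = x :=
  DFunLike.congr_fun (desc_one n) x

lemma projHom_of_initIndex (i : Fin (n - 1)) : projHom n (of (initIndex i)) = of i := by
  rw [← castHom_of, projHom_castHom]

lemma projHom_of_lastIndex (hn : n - 1 < n) : projHom n (of (lastIndex hn)) = 1 := by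
  simp [projHom]

lemma piHom_apply (φ : PSigmaAut n) (x : FG (n - 1)) :
    (piHom n φ : MulAut (FG (n - 1))) x = projHom n ((φ : MulAut (FG n)) (castHom n x)) :=
  rfl

lemma mem_Kn_iff {φ : PSigmaAut n} :
    φ ∈ Kn n ↔ ∀ i, projHom n ((φ : MulAut (FG n)) (of (initIndex i))) = of i := by
  simp_rw [← castHom_of, ← piHom_apply]
  constructor
  · intro h i
    rw [MonoidHom.mem_ker.1 h]
    rfl
  · intro h
    exact Subtype.ext (MulEquiv.toMonoidHom_injective (FreeGroup.ext_hom _ _ h))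

lemma alphaP_initIndex_lastIndex_mem_Kn (hn : n - 1 < n) (i : Fin (n - 1)) :
    alphaP n (initIndex i) (lastIndex hn) ∈ Kn n := by
  refine mem_Kn_iff.2 fun r => ?_
  change projHom n (alphaAut n _ _ _) = _
  rw [alphaAut_apply_of n (initIndex_ne_lastIndex hn i)]
  split_ifs with hr
  · rw [← hr, _root_.map_mul, _root_.map_mul, _root_.map_inv, projHom_of_lastIndex,
      projHom_of_initIndex]
    group
  · exact projHom_of_initIndex r

lemma alphaP_lastIndex_initIndex_mem_Kn (hn : n - 1 < n) (i : Fin (n - 1)) :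
    alphaP n (lastIndex hn) (initIndex i) ∈ Kn n := by
  refine mem_Kn_iff.2 fun r => ?_
  change projHom n (alphaAut n _ _ _) = _
  rw [alphaAut_apply_of n (initIndex_ne_lastIndex hn i).symm,
    if_neg (initIndex_ne_lastIndex hn r), projHom_of_initIndex]

/-- The set of the `α_{in}` and `α_{ni}` with `i ≤ n - 1`. -/
def lastAlphaSet (hn : n - 1 < n) : Set (PSigmaAut n) :=
  {g | ∃ i : Fin (n - 1), g = alphaP n (initIndex i) (lastIndex hn) ∨
    g = alphaP n (lastIndex hn) (initIndex i)}

lemma normalClosure_lastAlphaSet_le_Kn (hn : n - 1 < n) :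
    Subgroup.normalClosure (lastAlphaSet hn) ≤ Kn n := by
  have : (Kn n).Normal := MonoidHom.normal_ker _
  refine Subgroup.normalClosure_le_normal ?_
  rintro g ⟨i, rfl | rfl⟩
  · exact alphaP_initIndex_lastIndex_mem_Kn hn i
  · exact alphaP_lastIndex_initIndex_mem_Kn hn i

/-- The image of the section `PΣ_{n-1} → PΣ_n` of `π_n` that extends an automorphism of `F_{n-1}`
by `x_n ↦ x_n`, encoded as the set of those `φ` that fix `x_n` and restrict to `π_n φ` on
`F_{n-1}`. -/
def extensionSubgroup (hn : n - 1 < n) : Subgroup (PSigmaAut n) where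
  carrier := {φ | (φ : MulAut (FG n)) (of (lastIndex hn)) = of (lastIndex hn) ∧
    ∀ x, (φ : MulAut (FG n)) (castHom n x) =
      castHom n ((piHom n φ : MulAut (FG (n - 1))) x)}
  one_mem' := ⟨rfl, fun x => by rw [_root_.map_one]; rfl⟩
  mul_mem' := by
    rintro φ ψ ⟨hφ, hφ'⟩ ⟨hψ, hψ'⟩
    refine ⟨?_, fun x => ?_⟩
    · rw [Subgroup.coe_mul, MulAut.mul_apply, hψ, hφ]
    · rw [Subgroup.coe_mul, MulAut.mul_apply, hψ', hφ', _root_.map_mul]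
      rfl
  inv_mem' := by
    rintro φ ⟨hφ, hφ'⟩
    refine ⟨?_, fun x => ?_⟩
    · exact (MulEquiv.symm_apply_eq (φ : MulAut (FG n))).2 hφ.symm
    · refine (MulEquiv.symm_apply_eq (φ : MulAut (FG n))).2 ?_
      rw [hφ', _root_.map_inv]
      exact congrArg _ (MulAut.apply_inv_self _ _ _).symm

lemma mem_extensionSubgroup_of_forall_mem_range {hn : n - 1 < n} {φ : PSigmaAut n}
    (hlast : (φ : MulAut (FG n)) (of (lastIndex hn)) = of (lastIndex hn))
    (hinit : ∀ i, (φ : MulAut (FG n)) (of (initIndex i)) ∈ (castHom n).range) :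
    φ ∈ extensionSubgroup hn := by
  have hcomp : (φ : MulAut (FG n)).toMonoidHom.comp (castHom n) =
      (castHom n).comp (piHom n φ : MulAut (FG (n - 1))).toMonoidHom := by
    ext1 i
    obtain ⟨x, hx⟩ := hinit i
    change (φ : MulAut (FG n)) (castHom n (of i)) =
      castHom n (projHom n ((φ : MulAut (FG n)) (castHom n (of i))))
    rw [castHom_of, ← hx, projHom_castHom]
  exact ⟨hlast, DFunLike.congr_fun hcomp⟩

lemma alphaP_initIndex_initIndex_mem_extensionSubgroup (hn : n - 1 < n) {i j : Fin (n - 1)}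
    (hij : initIndex i ≠ initIndex j) :
    alphaP n (initIndex i) (initIndex j) ∈ extensionSubgroup hn := by
  have hrange (r : Fin (n - 1)) : of (initIndex r) ∈ (castHom n).range := ⟨of r, castHom_of r⟩
  refine mem_extensionSubgroup_of_forall_mem_range ?_ fun r => ?_
  · exact (alphaAut_apply_of n hij _).trans (if_neg (initIndex_ne_lastIndex hn i).symm)
  · change alphaAut n _ _ _ ∈ _
    rw [alphaAut_apply_of n hij]
    split_ifs
    · exact mul_mem (mul_mem (hrange j) (hrange i)) (inv_mem (hrange j))
    · exact hrange r

lemma disjoint_extensionSubgroup_Kn (hn : n - 1 < n) : Disjoint (extensionSubgroup hn) (Kn n) := by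
  rw [Subgroup.disjoint_def]
  rintro φ ⟨hlast, hinit⟩ hφ
  refine Subtype.ext (MulEquiv.toMonoidHom_injective (FreeGroup.ext_hom _ _ fun r => ?_))
  change (φ : MulAut (FG n)) (of r) = of r
  obtain rfl | ⟨i, rfl⟩ := eq_lastIndex_or_eq_initIndex hn r
  · exact hlast
  · rw [← castHom_of, hinit, MonoidHom.mem_ker.1 hφ]
    rfl

lemma extensionSubgroup_sup_normalClosure_lastAlphaSet (hn : n - 1 < n) :
    extensionSubgroup hn ⊔ Subgroup.normalClosure (lastAlphaSet hn) = ⊤ := by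
  rw [eq_top_iff, ← alphaSubgroup_eq_top n, alphaSubgroup, Subgroup.closure_le]
  rintro g ⟨i, j, hij, rfl⟩
  obtain rfl | ⟨i, rfl⟩ := eq_lastIndex_or_eq_initIndex hn i <;>
    obtain rfl | ⟨j, rfl⟩ := eq_lastIndex_or_eq_initIndex hn j
  · exact absurd rfl hij
  · exact Subgroup.mem_sup_right (Subgroup.subset_normalClosure ⟨j, Or.inr rfl⟩)
  · exact Subgroup.mem_sup_right (Subgroup.subset_normalClosure ⟨i, Or.inl rfl⟩)
  · exact Subgroup.mem_sup_left (alphaP_initIndex_initIndex_mem_extensionSubgroup hn hij)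

end Kernel

/-- STATEMENT 17: For every `n ≥ 2` and every `1 ≤ i ≤ n - 1`, the automorphisms `α_{in}`
and `α_{ni}` lie in `K_n`, and `K_n` is the normal closure in `PΣ_n` of
`{ α_{in}, α_{ni} : 1 ≤ i ≤ n - 1 }`. -/
theorem statement17 (n : ℕ) (hn : 2 ≤ n) :
    (∀ i : Fin (n - 1),
        alphaP n (Fin.castLE (Nat.sub_le n 1) i) ⟨n - 1, by omega⟩ ∈ Kn n ∧
        alphaP n ⟨n - 1, by omega⟩ (Fin.castLE (Nat.sub_le n 1) i) ∈ Kn n) ∧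
    Kn n = Subgroup.normalClosure {g : ↥(PSigmaAut n) |
      ∃ i : Fin (n - 1),
        g = alphaP n (Fin.castLE (Nat.sub_le n 1) i) ⟨n - 1, by omega⟩ ∨
          g = alphaP n ⟨n - 1, by omega⟩ (Fin.castLE (Nat.sub_le n 1) i)} := by
  have hlast : n - 1 < n := by omega
  constructor
  · exact fun i => ⟨alphaP_initIndex_lastIndex_mem_Kn hlast i,
      alphaP_lastIndex_initIndex_mem_Kn hlast i⟩
  · exact eq_of_disjoint_of_sup_eq_top (normalClosure_lastAlphaSet_le_Kn hlast)
      (disjoint_extensionSubgroup_Kn hlast)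
      (extensionSubgroup_sup_normalClosure_lastAlphaSet hlast)
end
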